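/- Let B be a finite simple (basic) graph with at least two vertices that has no isolated vertices and no universal vertices (a 'peeled' graph). Suppose there exist a 2-coloring c : V → {black, white} and a witness function w : V → V with w(x) ≠ x for all x, such that whenever {x, w(x)} is an edge then c(x) = white and c(w(x)) = black, and whenever {x, w(x)} is not an edge then c(x) = black and c(w(x)) = white. Then there also exist such a coloring and witness function in which the number of black vertices is at least ⌊n/2⌋, where n = |V|. -/

import Mathlib

/-!
A vertex set is the white set of a saturating coloring iff each of its members has a neighbor
outside it and each outside vertex has a non-neighbor inside it; the second condition says that it
dominates the complement graph. As `G` has no universal vertex, Ore's argument gives a minimal such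
dominating set `W` with at most `n / 2` members.

If some `x ∈ W` has no neighbor outside `W`, then `x` dominates everything outside `W`, so by
minimality every other `y ∈ W` is the only member of `W` dominating `y`; a non-neighbor of `y` then
lies outside `W`, hence is also a non-neighbor of `x`. So every neighbor of `x` has a non-neighbor
among the non-neighbors of `x`. Color white `x` and a minimal set `S` of non-neighbors of `x` that
provides these. Each `s ∈ S` has a private vertex, a neighbor of `x` whose only non-neighbor in `S`
is `s`; private vertices show both that this coloring is saturating and that `|S| ≤ deg x`. As also
`|S| ≤ n - 1 - deg x`, the white set has at most `(n + 1) / 2` members.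
-/

section MinimalCover

variable {X : Type*} {U : SetRel X X} {T S : Set X}

theorem exists_private_of_minimal_isCover (hS : Minimal (U.IsCover T) S) {s : X} (hs : s ∈ S) :
    ∃ t ∈ T, (t, s) ∈ U ∧ ∀ s' ∈ S, (t, s') ∈ U → s' = s := by
  by_contra! h
  refine hS.notMem_of_prop_sdiff_singleton (fun t ht ↦ ?_) hs
  obtain ⟨r, hr, htr⟩ := hS.prop ht
  by_cases hrs : r = s
  · obtain ⟨s', hs', hts', hne⟩ := h t ht (hrs ▸ htr)
    exact ⟨s', ⟨hs', hne⟩, hts'⟩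
  · exact ⟨r, ⟨hr, hrs⟩, htr⟩

theorem ncard_le_of_minimal_isCover (hS : Minimal (U.IsCover T) S) (hT : T.Finite) :
    S.ncard ≤ T.ncard := by
  choose! p hpT hpU hp using fun s (hs : s ∈ S) ↦ exists_private_of_minimal_isCover hS hs
  exact Set.ncard_le_ncard_of_injOn p hpT
    (fun s hs s' hs' h ↦ hp s' hs' s hs (h ▸ hpU s hs)) hT

end MinimalCover

section Saturation

variable {V : Type*} {G : SimpleGraph V} {W S : Set V} {x : V}

/-- The non-adjacency relation of a graph. It is reflexive, so that the covers of `Set.univ` with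
respect to it are the dominating sets of the complement graph. -/
def nonadjRel (G : SimpleGraph V) : SetRel V V := {p | ¬ G.Adj p.1 p.2}

/-- `W` is the set of white vertices of a coloring that admits a witness function: white vertices
have a black neighbor and black vertices have a white non-neighbor. -/
def IsSaturating (G : SimpleGraph V) (W : Set V) : Prop :=
  (∀ x ∈ W, ∃ y ∉ W, G.Adj x y) ∧ ∀ x ∉ W, ∃ y ∈ W, ¬ G.Adj x y

theorem IsSaturating.exists_witness (hW : IsSaturating G W) :
    ∃ w : V → V, (∀ x, w x ≠ x) ∧
      ∀ x, (G.Adj x (w x) → x ∈ W ∧ w x ∉ W) ∧ (¬ G.Adj x (w x) → x ∉ W ∧ w x ∈ W) := by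
  have hwitness : ∀ x, ∃ y, y ≠ x ∧
      (G.Adj x y → x ∈ W ∧ y ∉ W) ∧ (¬ G.Adj x y → x ∉ W ∧ y ∈ W) := by
    intro x
    by_cases hx : x ∈ W
    · obtain ⟨y, hy, hxy⟩ := hW.1 x hx
      exact ⟨y, hxy.ne', fun _ ↦ ⟨hx, hy⟩, fun h ↦ absurd hxy h⟩
    · obtain ⟨y, hy, hxy⟩ := hW.2 x hx
      exact ⟨y, ne_of_mem_of_not_mem hy hx, fun h ↦ absurd h hxy, fun _ ↦ ⟨hx, hy⟩⟩
  choose w hw_ne hw using hwitness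
  exact ⟨w, hw_ne, hw⟩

theorem isCover_nonadjRel_compl_of_minimal (huniv : ∀ v, ∃ u ≠ v, ¬ G.Adj v u)
    (hW : Minimal ((nonadjRel G).IsCover Set.univ) W) :
    (nonadjRel G).IsCover Set.univ Wᶜ := by
  intro v _
  by_cases hv : v ∈ W
  · obtain ⟨t, -, htv, ht⟩ := exists_private_of_minimal_isCover hW hv
    by_cases htW : t ∈ W
    · obtain rfl : t = v := ht t htW G.irrefl
      obtain ⟨u, hu, htu⟩ := huniv t
      exact ⟨u, fun huW ↦ hu (ht u huW htu), htu⟩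
    · exact ⟨t, htW, fun h ↦ htv h.symm⟩
  · exact ⟨v, hv, G.irrefl⟩

theorem exists_minimal_isCover_nonadjRel_two_mul_ncard_le [Finite V]
    (huniv : ∀ v, ∃ u ≠ v, ¬ G.Adj v u) :
    ∃ W, Minimal ((nonadjRel G).IsCover Set.univ) W ∧ 2 * W.ncard ≤ Nat.card V := by
  obtain ⟨W, hW⟩ := exists_minimalFor_of_wellFoundedLT ((nonadjRel G).IsCover Set.univ) Set.ncard
    ⟨Set.univ, fun v _ ↦ ⟨v, trivial, G.irrefl⟩⟩
  have hWmin : Minimal ((nonadjRel G).IsCover Set.univ) W :=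
    hW.minimal_of_strictMonoOn fun _ _ _ _ h ↦ Set.ncard_lt_ncard h
  have hle := hW.le (isCover_nonadjRel_compl_of_minimal huniv hWmin)
  have hadd := Set.ncard_add_ncard_compl W
  exact ⟨W, hWmin, by lia⟩

theorem exists_common_nonadj_of_minimal_isCover_nonadjRel (huniv : ∀ v, ∃ u ≠ v, ¬ G.Adj v u)
    (hW : Minimal ((nonadjRel G).IsCover Set.univ) W) (hx : x ∈ W)
    (hxW : ∀ y ∉ W, ¬ G.Adj x y) {y : V} (hxy : G.Adj x y) :
    ∃ u ≠ x, ¬ G.Adj x u ∧ ¬ G.Adj y u := by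
  have hyW : y ∈ W := by_contra fun h ↦ hxW y h hxy
  obtain ⟨t, -, -, ht⟩ := exists_private_of_minimal_isCover hW hyW
  have htW : t ∈ W := by_contra fun h ↦ hxy.ne (ht x hx fun htx ↦ hxW t h htx.symm)
  obtain rfl : t = y := ht t htW G.irrefl
  obtain ⟨u, hu, htu⟩ := huniv t
  have huW : u ∉ W := fun h ↦ hu (ht u h htu)
  exact ⟨u, (ne_of_mem_of_not_mem hx huW).symm, hxW u huW, htu⟩

theorem isSaturating_insert_of_minimal_isCover (hiso : ∀ v, ∃ u, G.Adj v u)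
    (hSx : S ⊆ Gᶜ.neighborSet x) (hS : Minimal ((nonadjRel G).IsCover (G.neighborSet x)) S) :
    IsSaturating G (insert x S) := by
  have hnotMem : ∀ y, G.Adj x y → y ∉ insert x S := by
    rintro y hxy (rfl | hy)
    exacts [hxy.ne rfl, (hSx hy).2 hxy]
  constructor
  · rintro s (rfl | hs)
    · obtain ⟨y, hsy⟩ := hiso s
      exact ⟨y, hnotMem y hsy, hsy⟩
    · obtain ⟨u, hsu⟩ := hiso s
      by_cases huS : u ∈ S
      · obtain ⟨t, hxt, -, ht⟩ := exists_private_of_minimal_isCover hS huS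
        have hts : G.Adj t s := by_contra fun h ↦ hsu.ne (ht s hs h)
        exact ⟨t, hnotMem t hxt, hts.symm⟩
      · have hux : u ≠ x := by
          rintro rfl
          exact (hSx hs).2 hsu.symm
        exact ⟨u, Set.mem_insert_iff.not.2 (not_or.2 ⟨hux, huS⟩), hsu⟩
  · intro y _
    by_cases hxy : G.Adj x y
    · obtain ⟨s, hs, hys⟩ := hS.prop hxy
      exact ⟨s, Set.mem_insert_of_mem x hs, hys⟩
    · exact ⟨x, Set.mem_insert x S, fun h ↦ hxy h.symm⟩

theorem ncard_neighborSet_add_ncard_compl_neighborSet [Finite V] (G : SimpleGraph V) (v : V) :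
    (G.neighborSet v).ncard + (Gᶜ.neighborSet v).ncard + 1 = Nat.card V := by
  rw [← Set.ncard_union_eq (G.compl_neighborSet_disjoint v),
    G.neighborSet_union_compl_neighborSet_eq v, add_comm, ← Set.ncard_singleton v,
    Set.ncard_add_ncard_compl]

theorem exists_isSaturating_two_mul_ncard_le_of_common_nonadj [Finite V]
    (hiso : ∀ v, ∃ u, G.Adj v u)
    (hx : ∀ y, G.Adj x y → ∃ u ≠ x, ¬ G.Adj x u ∧ ¬ G.Adj y u) :
    ∃ W, IsSaturating G W ∧ 2 * W.ncard ≤ Nat.card V + 1 := by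
  have hcover : (nonadjRel G).IsCover (G.neighborSet x) (Gᶜ.neighborSet x) := fun y hxy ↦
    let ⟨u, hux, hxu, hyu⟩ := hx y hxy
    ⟨u, ⟨hux.symm, hxu⟩, hyu⟩
  obtain ⟨S, hSx, hS⟩ := exists_minimal_le_of_wellFoundedLT _ _ hcover
  refine ⟨insert x S, isSaturating_insert_of_minimal_isCover hiso hSx hS, ?_⟩
  have hS_le_adj := ncard_le_of_minimal_isCover hS (Set.toFinite _)
  have hS_le_nonadj := Set.ncard_le_ncard hSx
  have hdeg := ncard_neighborSet_add_ncard_compl_neighborSet G x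
  have hinsert := Set.ncard_insert_le x S
  lia

theorem exists_isSaturating_two_mul_ncard_le [Finite V] (hiso : ∀ v, ∃ u, G.Adj v u)
    (huniv : ∀ v, ∃ u ≠ v, ¬ G.Adj v u) :
    ∃ W, IsSaturating G W ∧ 2 * W.ncard ≤ Nat.card V + 1 := by
  obtain ⟨W, hW, hcard⟩ := exists_minimal_isCover_nonadjRel_two_mul_ncard_le huniv
  by_cases hout : ∀ x ∈ W, ∃ y ∉ W, G.Adj x y
  · exact ⟨W, ⟨hout, fun x _ ↦ hW.prop trivial⟩, by lia⟩
  · push Not at hout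
    obtain ⟨x, hx, hxW⟩ := hout
    exact exists_isSaturating_two_mul_ncard_le_of_common_nonadj hiso fun y ↦
      exists_common_nonadj_of_minimal_isCover_nonadjRel huniv hW hx hxW

end Saturation

theorem stmt_0_general {V : Type*} [Fintype V] (G : SimpleGraph V)
    (h_no_isolated : ∀ v : V, ∃ u : V, G.Adj v u)
    (h_no_universal : ∀ v : V, ∃ u : V, u ≠ v ∧ ¬ G.Adj v u) :
    ∃ (c : V → Bool) (w : V → V), (∀ x, w x ≠ x) ∧
      (∀ x, (G.Adj x (w x) → c x = false ∧ c (w x) = true) ∧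
            (¬ G.Adj x (w x) → c x = true ∧ c (w x) = false)) ∧
      Fintype.card V / 2 ≤ (Finset.univ.filter (fun v => c v = true)).card := by
  classical
  obtain ⟨W, hW, hcard⟩ := exists_isSaturating_two_mul_ncard_le h_no_isolated h_no_universal
  obtain ⟨w, hw_ne, hw⟩ := hW.exists_witness
  refine ⟨fun v ↦ decide (v ∉ W), w, hw_ne, by simpa using hw, ?_⟩
  have hblack : {v | decide (v ∉ W) = true} = (Wᶜ : Set V) := by
    ext v
    simp
  have hadd := Set.ncard_add_ncard_compl W
  rw [Nat.card_eq_fintype_card] at hcard hadd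
  rw [← Set.ncard_coe_finset, Finset.coe_filter_univ, hblack]
  lia

/-- A peeled graph (no isolated, no universal vertices, ≥ 2 vertices)
that admits a P-saturation (pattern: ⊕ white→black, ⊖ black→white) admits one of
weight at least ⌊n/2⌋. Black is encoded as `true`. -/
theorem stmt_0 {V : Type*} [Fintype V] [DecidableEq V] (G : SimpleGraph V)
    [DecidableRel G.Adj]
    (hcard : 2 ≤ Fintype.card V)
    (h_no_isolated : ∀ v : V, ∃ u : V, G.Adj v u)
    (h_no_universal : ∀ v : V, ∃ u : V, u ≠ v ∧ ¬ G.Adj v u)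
    (h_sat : ∃ (c : V → Bool) (w : V → V), (∀ x, w x ≠ x) ∧
      (∀ x, (G.Adj x (w x) → c x = false ∧ c (w x) = true) ∧
            (¬ G.Adj x (w x) → c x = true ∧ c (w x) = false))) :
    ∃ (c : V → Bool) (w : V → V), (∀ x, w x ≠ x) ∧
      (∀ x, (G.Adj x (w x) → c x = false ∧ c (w x) = true) ∧
            (¬ G.Adj x (w x) → c x = true ∧ c (w x) = false)) ∧
      Fintype.card V / 2 ≤ (Finset.univ.filter (fun v => c v = true)).card :=
  stmt_0_general G h_no_isolated h_no_universal
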